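/- Let QB_m(N) be a quasi-banana graph with N = (q_1, …, q_m), and let 1 ≤ L ≤ K ≤ m. Write C_{A,B} = ∪_{i=A}^{B} C_i. Then for every 1 ≤ j ≤ q_L, the divisor u_{0,1} + Σ_{w∈C_{0,K}} w is linearly equivalent to (Σ_{i=1}^{L} q_i + 2)·u_{L,j} + Σ_{w∈C_{L+1,K}} w. -/

import Mathlib

open Finset

variable {V : Type*} [Fintype V] [DecidableEq V]

/-- A finite loopless multigraph on vertex type `V`, given by symmetric edge multiplicities. -/
structure Multigraph (V : Type*) [Fintype V] [DecidableEq V] where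
  mult : V → V → ℕ
  symm : ∀ u v, mult u v = mult v u
  loopless : ∀ v, mult v v = 0

namespace Multigraph

def Adj (G : Multigraph V) (u v : V) : Prop := 0 < G.mult u v

/-- A graph is connected. -/
def Connected (G : Multigraph V) : Prop :=
  Nonempty V ∧ ∀ u v : V, Relation.ReflTransGen G.Adj u v

/-- Valence of a vertex. -/
def valence (G : Multigraph V) (v : V) : ℕ := ∑ u, G.mult v u

/-- The Laplacian applied to an integer-valued function on the vertices. -/
def laplacian (G : Multigraph V) (f : V → ℤ) : V → ℤ :=
  fun w => ∑ u, (G.mult w u : ℤ) * (f w - f u)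

/-- Degree of a divisor. -/
def degree (D : V → ℤ) : ℤ := ∑ v, D v

/-- A divisor is effective if all coefficients are nonnegative. -/
def Effective (D : V → ℤ) : Prop := ∀ v, 0 ≤ D v

/-- Linear equivalence of divisors: they differ by a sequence of chip-firing moves,
equivalently by a Laplacian of an integer function. -/
def LinEquiv (G : Multigraph V) (D D' : V → ℤ) : Prop :=
  ∃ f : V → ℤ, D' = D - G.laplacian f

/-- A divisor is winnable if it is linearly equivalent to an effective divisor. -/
def Winnable (G : Multigraph V) (D : V → ℤ) : Prop :=
  ∃ E : V → ℤ, Effective E ∧ G.LinEquiv D E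

/-- The Baker–Norine rank of a divisor: the largest `r` such that `D - E` is winnable for
every effective divisor `E` of degree `r` (the defining set contains all negative integers,
and its supremum is `-1` precisely when `D` itself is not winnable). -/
noncomputable def rank (G : Multigraph V) (D : V → ℤ) : ℤ :=
  sSup {r : ℤ | ∀ E : V → ℤ, Effective E → degree E = r → G.Winnable (fun w => D w - E w)}

/-- The `k`-th gonality of a graph: the smallest degree of a divisor of rank `k`. -/
noncomputable def gonality (G : Multigraph V) (k : ℤ) : ℤ :=
  sInf {d : ℤ | ∃ D : V → ℤ, G.rank D = k ∧ degree D = d}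

/-- A graph is gonality-tight if its second gonality exceeds its first by exactly 1. -/
def GonalityTight (G : Multigraph V) : Prop :=
  G.gonality 2 = G.gonality 1 + 1

/-- A divisor realises the `k`-th gonality if it has rank `k` and degree `gon_k(G)`. -/
def Realises (G : Multigraph V) (k : ℤ) (D : V → ℤ) : Prop :=
  G.rank D = k ∧ degree D = G.gonality k

/-- A divisor is `v`-reduced: nonnegative away from `v`, and set-firing any nonempty set of
vertices not containing `v` creates a negative coefficient inside the set. -/
def Reduced (G : Multigraph V) (v : V) (D : V → ℤ) : Prop :=
  (∀ w, w ≠ v → 0 ≤ D w) ∧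
    ∀ U : Finset V, U.Nonempty → v ∉ U →
      ∃ w ∈ U, D w - ∑ u ∈ Uᶜ, (G.mult w u : ℤ) < 0

/-- The genus (first Betti number) of a graph: `|E| - |V| + 1`. -/
def genus (G : Multigraph V) : ℤ :=
  ((∑ u, ∑ v, G.mult u v : ℕ) : ℤ) / 2 - Fintype.card V + 1

/-- The canonical divisor of a graph. -/
def canonical (G : Multigraph V) : V → ℤ :=
  fun w => (G.valence w : ℤ) - 2

/-- The subgraph induced on a set `S` of vertices (with all edges among `S`). -/
def induce (G : Multigraph V) (S : Finset V) : Multigraph {x // x ∈ S} where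
  mult a b := G.mult a b
  symm a b := G.symm a b
  loopless a := G.loopless a

/-- `G.SeparatedBy u w v` means every path from `w` to `v` passes through `u`. -/
def SeparatedBy (G : Multigraph V) (u w v : V) : Prop :=
  ¬ Relation.ReflTransGen (fun x y => G.Adj x y ∧ x ≠ u ∧ y ≠ u) w v

end Multigraph

/-- Size of the `i`-th level of a quasi-banana graph: level `0` has a single vertex. -/
def qbSize (q : ℕ → ℕ) (i : ℕ) : ℕ := if i = 0 then 1 else q i

/-- `ℓ` is a quasi-banana labelling of `G` exhibiting `G ≅ QB_m(q_1, …, q_m)`: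
`ℓ` is a bijection onto the pairs `(i, j)` with `i ≤ m`, `1 ≤ j ≤ qbSize q i`
(vertex `u_{i,j}` is the vertex labelled `(i,j)`), and the edge multiplicities are:
one edge between distinct vertices of the same level, `(∑_{k=1}^{i} q_k) + 2` edges
between `u_{i,1}` and each `u_{i+1,j}`, and no other edges. -/
def Multigraph.IsQBLabelling (G : Multigraph V) (m : ℕ) (q : ℕ → ℕ) (ℓ : V → ℕ × ℕ) : Prop :=
  (∀ i, 1 ≤ i → i ≤ m → 0 < q i) ∧
  Function.Injective ℓ ∧
  (∀ v : V, (ℓ v).1 ≤ m ∧ 1 ≤ (ℓ v).2 ∧ (ℓ v).2 ≤ qbSize q (ℓ v).1) ∧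
  (∀ i j : ℕ, i ≤ m → 1 ≤ j → j ≤ qbSize q i → ∃ v, ℓ v = (i, j)) ∧
  (∀ v w : V, v ≠ w → G.mult v w =
    if (ℓ v).1 = (ℓ w).1 then 1
    else if (ℓ v).1 + 1 = (ℓ w).1 ∧ (ℓ v).2 = 1 then (∑ i ∈ Finset.Icc 1 (ℓ v).1, q i) + 2
    else if (ℓ w).1 + 1 = (ℓ v).1 ∧ (ℓ w).2 = 1 then (∑ i ∈ Finset.Icc 1 (ℓ w).1, q i) + 2
    else 0)

/-- A graph is a quasi-banana graph if it is isomorphic to some `QB_m(N)`. -/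
def Multigraph.IsQuasiBanana (G : Multigraph V) : Prop :=
  ∃ (m : ℕ) (q : ℕ → ℕ) (ℓ : V → ℕ × ℕ), G.IsQBLabelling m q ℓ

/-- The graph obtained from `G'` by attaching a complete graph `K_n`: `n` new vertices
pairwise joined by exactly one edge, each joined to `v` by exactly `k+1` edges. -/
def attachComplete (G' : Multigraph V) (v : V) (k n : ℕ) : Multigraph (V ⊕ Fin n) where
  mult x y :=
    match x, y with
    | Sum.inl a, Sum.inl b => G'.mult a b
    | Sum.inl a, Sum.inr _ => if a = v then k + 1 else 0
    | Sum.inr _, Sum.inl b => if b = v then k + 1 else 0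
    | Sum.inr i, Sum.inr j => if i = j then 0 else 1
  symm := by
    rintro (a | i) (b | j)
    · exact G'.symm a b
    · rfl
    · rfl
    · by_cases h : i = j
      · simp [h]
      · simp [h, Ne.symm h]
  loopless := by
    rintro (a | i)
    · exact G'.loopless a
    · simp

/-
Let `D_{L,j}` be the divisor `b_L · u_{L,j} + ∑_{w ∈ C_{L+1,K}} w`, where `b_L` is the number of
edges from `u_{L,1}` to each vertex of level `L + 1`. The vertex `a = u_{L+1,j}`, together with all
levels beyond it if `j = 1`, meets the rest of the graph only through `a`. Firing that rest once
costs `u_{L,1}` its `b_L` chips and every other vertex of level `L + 1` its only chip, all of which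
arrive at `a`; this turns `D_{L,1}` into `D_{L+1,j}`. Starting from `D_{0,1}`, which is the divisor
`u_{0,1} + ∑_{w ∈ C_{0,K}} w`, induct on `L`.
-/

namespace Multigraph

variable {G : Multigraph V}

theorem laplacian_add (f g : V → ℤ) : G.laplacian (f + g) = G.laplacian f + G.laplacian g := by
  funext w
  simp only [laplacian, Pi.add_apply, add_sub_add_comm, mul_add, sum_add_distrib]

theorem LinEquiv.refl (D : V → ℤ) : G.LinEquiv D D :=
  ⟨0, by funext w; simp [laplacian]⟩

theorem LinEquiv.trans {D₁ D₂ D₃ : V → ℤ} (h₁₂ : G.LinEquiv D₁ D₂) (h₂₃ : G.LinEquiv D₂ D₃) :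
    G.LinEquiv D₁ D₃ := by
  obtain ⟨f, rfl⟩ := h₁₂
  obtain ⟨g, rfl⟩ := h₂₃
  exact ⟨f + g, by rw [laplacian_add, sub_sub]⟩

theorem laplacian_indicator_apply_of_mem {U : Finset V} {w : V} (hw : w ∈ U) :
    G.laplacian (fun v => if v ∈ U then 1 else 0) w = ∑ u ∈ Uᶜ, (G.mult w u : ℤ) := by
  simp only [laplacian, hw, if_true, ← sum_add_sum_compl U]
  rw [sum_eq_zero fun u hu => by simp [hu], zero_add]
  exact sum_congr rfl fun u hu => by simp [mem_compl.mp hu]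

theorem laplacian_indicator_apply_of_notMem {U : Finset V} {w : V} (hw : w ∉ U) :
    G.laplacian (fun v => if v ∈ U then 1 else 0) w = -∑ u ∈ U, (G.mult w u : ℤ) := by
  simp [laplacian, hw]

/-- The vertex set `U` contains `a` and is joined to its complement only through `a`, so that
firing the complement changes no coefficient in `U` other than that of `a`. -/
def IsBranch (G : Multigraph V) (a : V) (U : Finset V) : Prop :=
  a ∈ U ∧ ∀ u ∈ U, u ≠ a → ∀ w ∉ U, G.mult u w = 0

theorem IsBranch.linEquiv {a : V} {U : Finset V} (hU : G.IsBranch a U) {D D' : V → ℤ}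
    (hroot : D' a = D a + ∑ w ∈ Uᶜ, (G.mult a w : ℤ))
    (hmem : ∀ u ∈ U, u ≠ a → D' u = D u)
    (hnotMem : ∀ w ∉ U, D' w = D w - G.mult a w) :
    G.LinEquiv D D' := by
  refine ⟨fun v => if v ∈ Uᶜ then 1 else 0, funext fun w => ?_⟩
  rw [Pi.sub_apply]
  by_cases hw : w ∈ U
  · rw [laplacian_indicator_apply_of_notMem (notMem_compl.mpr hw), sub_neg_eq_add]
    by_cases hwa : w = a
    · rw [hwa, hroot]
    · rw [hmem w hw hwa, sum_eq_zero, add_zero]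
      intro u hu
      exact_mod_cast hU.2 w hw hwa u (mem_compl.mp hu)
  · rw [laplacian_indicator_apply_of_mem (mem_compl.mpr hw), compl_compl, hnotMem w hw,
      sum_eq_single_of_mem a hU.1, G.symm]
    intro u hu hua
    rw [G.symm]
    exact_mod_cast hU.2 u hu hua w hw

end Multigraph

/-- The number `q₁ + ⋯ + qᵢ + 2` of edges from `u_{i,1}` to each vertex of level `i + 1` of a
quasi-banana graph. -/
def bridgeMult (q : ℕ → ℕ) (i : ℕ) : ℕ := (∑ k ∈ Icc 1 i, q k) + 2

theorem bridgeMult_succ (q : ℕ → ℕ) (i : ℕ) :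
    bridgeMult q (i + 1) = bridgeMult q i + q (i + 1) := by
  rw [bridgeMult, bridgeMult, sum_Icc_succ_top (by omega), add_right_comm]

/-- The divisor `(q₁ + ⋯ + q_L + 2) · u_{L,j} + ∑_{w ∈ C_{L+1,K}} w` on a graph labelled by `ℓ`:
the stages through which chips are moved up the levels. -/
def pileDivisor (q : ℕ → ℕ) (ℓ : V → ℕ × ℕ) (K L j : ℕ) : V → ℤ :=
  fun w => if ℓ w = (L, j) then (bridgeMult q L : ℤ)
    else if L < (ℓ w).1 ∧ (ℓ w).1 ≤ K then 1 else 0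

/-- The vertex `a` of a quasi-banana graph labelled by `ℓ`, together with all levels beyond that of
`a` if `a` is the first vertex of its level, the only one joined to the next level.
Firing its complement moves the pile of chips from level to level. -/
def qbBranch (ℓ : V → ℕ × ℕ) (a : V) : Finset V :=
  {w | w = a ∨ ((ℓ a).2 = 1 ∧ (ℓ a).1 < (ℓ w).1)}

theorem mem_qbBranch {ℓ : V → ℕ × ℕ} {a w : V} :
    w ∈ qbBranch ℓ a ↔ w = a ∨ ((ℓ a).2 = 1 ∧ (ℓ a).1 < (ℓ w).1) := by
  simp [qbBranch]

namespace Multigraph.IsQBLabelling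

variable {G : Multigraph V} {m : ℕ} {q : ℕ → ℕ} {ℓ : V → ℕ × ℕ}

theorem injective (hQB : G.IsQBLabelling m q ℓ) : Function.Injective ℓ := hQB.2.1

theorem snd_mem_Icc (hQB : G.IsQBLabelling m q ℓ) (v : V) :
    (ℓ v).2 ∈ Icc 1 (qbSize q (ℓ v).1) :=
  mem_Icc.mpr (hQB.2.2.1 v).2

theorem exists_eq (hQB : G.IsQBLabelling m q ℓ) {i j : ℕ} (hi : i ≤ m)
    (hj : j ∈ Icc 1 (qbSize q i)) : ∃ v, ℓ v = (i, j) :=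
  hQB.2.2.2.1 i j hi (mem_Icc.mp hj).1 (mem_Icc.mp hj).2

theorem one_mem_Icc_qbSize (hQB : G.IsQBLabelling m q ℓ) {i : ℕ} (hi : i ≤ m) :
    1 ∈ Icc 1 (qbSize q i) := by
  rcases i.eq_zero_or_pos with rfl | hpos
  · simp [qbSize]
  · have hq := hQB.1 i hpos hi
    simp only [qbSize, hpos.ne', if_false, mem_Icc]
    omega

theorem mult_eq_one_of_level_eq (hQB : G.IsQBLabelling m q ℓ) {v w : V} (hvw : v ≠ w)
    (hlevel : (ℓ v).1 = (ℓ w).1) : G.mult v w = 1 := by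
  rw [hQB.2.2.2.2 v w hvw, if_pos hlevel]

theorem mult_of_lt (hQB : G.IsQBLabelling m q ℓ) {v w : V} (hlt : (ℓ v).1 < (ℓ w).1) :
    G.mult v w =
      if (ℓ v).1 + 1 = (ℓ w).1 ∧ (ℓ v).2 = 1 then bridgeMult q (ℓ v).1 else 0 := by
  have hvw : v ≠ w := by rintro rfl; exact hlt.false
  have hback : ¬((ℓ w).1 + 1 = (ℓ v).1 ∧ (ℓ w).2 = 1) := by omega
  rw [hQB.2.2.2.2 v w hvw, if_neg hlt.ne, if_neg hback, bridgeMult]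

theorem card_level (hQB : G.IsQBLabelling m q ℓ) {i : ℕ} (hi : i ≤ m) :
    #{v | (ℓ v).1 = i} = qbSize q i := by
  have hcard : #{v | (ℓ v).1 = i} = #(Icc 1 (qbSize q i)) := by
    refine card_nbij (fun v => (ℓ v).2) ?_ ?_ ?_
    · intro v hv
      obtain rfl := (mem_filter.mp hv).2
      exact hQB.snd_mem_Icc v
    · intro v hv w hw hvw
      have hlevel : (ℓ v).1 = (ℓ w).1 := (mem_filter.mp hv).2.trans (mem_filter.mp hw).2.symm
      exact hQB.injective (Prod.ext hlevel hvw)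
    · intro j hj
      obtain ⟨v, hv⟩ := hQB.exists_eq hi hj
      exact ⟨v, by simp [hv], by simp [hv]⟩
  rw [hcard, Nat.card_Icc, Nat.add_sub_cancel]

theorem isBranch_qbBranch (hQB : G.IsQBLabelling m q ℓ) (a : V) :
    G.IsBranch a (qbBranch ℓ a) := by
  refine ⟨mem_qbBranch.mpr (Or.inl rfl), fun u hu hua w hw => ?_⟩
  obtain ⟨hfirst, hau⟩ := (mem_qbBranch.mp hu).resolve_left hua
  obtain ⟨hwa, hnotBeyond⟩ := not_or.mp (mem_qbBranch.not.mp hw)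
  have hlevel : (ℓ w).1 ≤ (ℓ a).1 := not_lt.mp fun hlt => hnotBeyond ⟨hfirst, hlt⟩
  rw [G.symm, hQB.mult_of_lt (hlevel.trans_lt hau), if_neg]
  rintro ⟨hnext, hw1⟩
  exact hwa (hQB.injective (Prod.ext (by omega) (hw1.trans hfirst.symm)))

theorem mult_of_notMem_qbBranch (hQB : G.IsQBLabelling m q ℓ) {L : ℕ} {a w : V}
    (ha : (ℓ a).1 = L + 1) (hw : w ∉ qbBranch ℓ a) :
    G.mult a w =
      if ℓ w = (L, 1) then bridgeMult q L else if (ℓ w).1 = L + 1 then 1 else 0 := by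
  obtain ⟨hwa, hnotBeyond⟩ := not_or.mp (mem_qbBranch.not.mp hw)
  rcases lt_trichotomy (ℓ w).1 (ℓ a).1 with hlt | heq | hgt
  · rw [G.symm, hQB.mult_of_lt hlt, if_neg (show (ℓ w).1 ≠ L + 1 by omega)]
    by_cases hparent : ℓ w = (L, 1)
    · simp [hparent, ha]
    · rw [if_neg hparent, if_neg]
      rintro ⟨hnext, hw1⟩
      exact hparent (Prod.ext (by omega) hw1)
  · rw [hQB.mult_eq_one_of_level_eq (Ne.symm hwa) heq.symm, if_neg, if_pos (heq.trans ha)]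
    intro hparent
    simp only [hparent, ha] at heq
    omega
  · rw [hQB.mult_of_lt hgt, if_neg fun h => hnotBeyond ⟨h.2, hgt⟩, if_neg, if_neg (by omega)]
    intro hparent
    simp only [hparent, ha] at hgt
    omega

theorem sum_compl_qbBranch_mult_add_one (hQB : G.IsQBLabelling m q ℓ) {L : ℕ} (hL : L + 1 ≤ m)
    {a : V} (ha : (ℓ a).1 = L + 1) :
    ∑ w ∈ (qbBranch ℓ a)ᶜ, G.mult a w + 1 = bridgeMult q (L + 1) := by
  obtain ⟨p, hp⟩ := hQB.exists_eq (by omega) (hQB.one_mem_Icc_qbSize (show L ≤ m by omega))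
  set siblings : Finset V := ({w | (ℓ w).1 = L + 1} : Finset V).erase a with hsiblings
  have hcard : #siblings + 1 = q (L + 1) := by
    rw [hsiblings, card_erase_add_one (by simp [ha]), hQB.card_level hL]
    simp [qbSize]
  have hp_notMem : p ∉ siblings := by simp [hsiblings, hp]
  have hsubset : insert p siblings ⊆ (qbBranch ℓ a)ᶜ := by
    intro w hw
    rw [mem_compl, mem_qbBranch]
    have hwa : w ≠ a := by rintro rfl; simp_all
    have hlevel : (ℓ w).1 ≤ (ℓ a).1 := by
      rcases mem_insert.mp hw with rfl | hw
      · simp [hp, ha]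
      · rw [(mem_filter.mp (mem_of_mem_erase hw)).2, ha]
    exact not_or.mpr ⟨hwa, fun hbeyond => hlevel.not_gt hbeyond.2⟩
  have hsupport : ∀ w ∈ (qbBranch ℓ a)ᶜ, w ∉ insert p siblings → G.mult a w = 0 := by
    intro w hw hw_notMem
    have hwU : w ∉ qbBranch ℓ a := mem_compl.mp hw
    have hwa : w ≠ a := fun h => hwU (mem_qbBranch.mpr (Or.inl h))
    obtain ⟨hwp, hw_sibling⟩ := not_or.mp (mem_insert.not.mp hw_notMem)
    rw [hQB.mult_of_notMem_qbBranch ha hwU, if_neg fun h => hwp (hQB.injective (h.trans hp.symm)),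
      if_neg fun h => hw_sibling (by simp [hsiblings, hwa, h])]
  have hmult_p : G.mult a p = bridgeMult q L := by
    rw [hQB.mult_of_notMem_qbBranch ha (mem_compl.mp (hsubset (mem_insert_self p _))), if_pos hp]
  have hmult_siblings : ∀ w ∈ siblings, G.mult a w = 1 := by
    intro w hw
    obtain ⟨hwa, hlevel⟩ := mem_erase.mp hw
    exact hQB.mult_eq_one_of_level_eq (Ne.symm hwa) (ha.trans (mem_filter.mp hlevel).2.symm)
  rw [← sum_subset hsubset hsupport, sum_insert hp_notMem, hmult_p, sum_congr rfl hmult_siblings,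
    ← card_eq_sum_ones, add_assoc, hcard, bridgeMult_succ]

theorem linEquiv_pileDivisor_succ (hQB : G.IsQBLabelling m q ℓ) {K L j : ℕ} (hLK : L + 1 ≤ K)
    (hLm : L + 1 ≤ m) (hj : j ∈ Icc 1 (qbSize q (L + 1))) :
    G.LinEquiv (pileDivisor q ℓ K L 1) (pileDivisor q ℓ K (L + 1) j) := by
  obtain ⟨a, ha⟩ := hQB.exists_eq hLm hj
  have ha_level : (ℓ a).1 = L + 1 := by rw [ha]
  refine (hQB.isBranch_qbBranch a).linEquiv ?_ (fun u hu hua => ?_) (fun w hw => ?_)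
  · have hsum := hQB.sum_compl_qbBranch_mult_add_one hLm ha_level
    simp [pileDivisor, ha, hLK, ← hsum, add_comm]
  · have hbeyond := ((mem_qbBranch.mp hu).resolve_left hua).2
    have hlevel : L + 1 < (ℓ u).1 := by rwa [ha_level] at hbeyond
    have hu_parent : ℓ u ≠ (L, 1) := fun h => by simp only [h] at hlevel; omega
    have hu_root : ℓ u ≠ (L + 1, j) := fun h => hua (hQB.injective (h.trans ha.symm))
    simp only [pileDivisor, hu_parent, hu_root, hlevel, (Nat.lt_succ_self L).trans hlevel, if_false]
  · have hwa : w ≠ a := fun h => hw (mem_qbBranch.mpr (Or.inl h))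
    have hw_ne : ℓ w ≠ (L + 1, j) := fun h => hwa (hQB.injective (h.trans ha.symm))
    rw [hQB.mult_of_notMem_qbBranch ha_level hw]
    simp only [pileDivisor, hw_ne, if_false]
    by_cases hparent : ℓ w = (L, 1)
    · simp [hparent]
    · by_cases hsibling : (ℓ w).1 = L + 1
      · simp [hparent, hsibling, hLK]
      · have hlevel : L + 1 < (ℓ w).1 ↔ L < (ℓ w).1 := by omega
        simp [hparent, hsibling, hlevel]

theorem linEquiv_pileDivisor (hQB : G.IsQBLabelling m q ℓ) {K L j : ℕ} (hLK : L ≤ K) (hLm : L ≤ m)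
    (hj : j ∈ Icc 1 (qbSize q L)) :
    G.LinEquiv (pileDivisor q ℓ K 0 1) (pileDivisor q ℓ K L j) := by
  induction L generalizing j with
  | zero =>
    obtain rfl : j = 1 := by simpa [qbSize] using hj
    exact .refl _
  | succ L ih =>
    have hbefore : G.LinEquiv (pileDivisor q ℓ K 0 1) (pileDivisor q ℓ K L 1) :=
      ih (by omega) (by omega) (hQB.one_mem_Icc_qbSize (by omega))
    exact hbefore.trans (hQB.linEquiv_pileDivisor_succ hLK hLm hj)

theorem pileDivisor_zero_one (hQB : G.IsQBLabelling m q ℓ) (K : ℕ) :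
    pileDivisor q ℓ K 0 1 =
      fun w => (if ℓ w = (0, 1) then 1 else 0) + (if (ℓ w).1 ≤ K then 1 else 0) := by
  funext w
  by_cases hw : ℓ w = (0, 1)
  · simp [pileDivisor, bridgeMult, hw]
  · have hpos : 0 < (ℓ w).1 := by
      refine Nat.pos_of_ne_zero fun h0 => hw (Prod.ext h0 ?_)
      simpa [qbSize, h0] using hQB.snd_mem_Icc w
    simp [pileDivisor, hw, hpos]

end Multigraph.IsQBLabelling

/-- Chip-firing on quasi-banana graphs: for `1 ≤ L ≤ K ≤ m` and
`1 ≤ j ≤ q_L`, the divisor `u_{0,1} + ∑_{w ∈ C_{0,K}} w` is linearly equivalent to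
`(∑_{i=1}^{L} q_i + 2)·u_{L,j} + ∑_{w ∈ C_{L+1,K}} w`. -/
theorem stmt15 (G : Multigraph V) (m : ℕ) (q : ℕ → ℕ) (ℓ : V → ℕ × ℕ)
    (hQB : G.IsQBLabelling m q ℓ)
    (L K : ℕ) (hL : 1 ≤ L) (hLK : L ≤ K) (hK : K ≤ m)
    (j : ℕ) (hj : 1 ≤ j) (hjq : j ≤ q L) :
    G.LinEquiv
      (fun w => (if ℓ w = (0, 1) then 1 else 0) + (if (ℓ w).1 ≤ K then 1 else 0))
      (fun w => if ℓ w = (L, j) then ((∑ i ∈ Finset.Icc 1 L, q i : ℕ) : ℤ) + 2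
        else if L + 1 ≤ (ℓ w).1 ∧ (ℓ w).1 ≤ K then 1 else 0) := by
  have hjL : j ∈ Icc 1 (qbSize q L) := by
    rw [qbSize, if_neg (by omega)]
    exact mem_Icc.mpr ⟨hj, hjq⟩
  have hequiv := hQB.linEquiv_pileDivisor hLK (hLK.trans hK) hjL
  rw [hQB.pileDivisor_zero_one] at hequiv
  exact hequiv
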